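/- Let p ≥ 7 be a prime with p ≡ 3 (mod 4). Then v_p(G_p(p)) ≥ 6 if and only if B_{p−3} ≡ 0 (mod p); equivalently, v_p(G_p(p)) = 5 if and only if B_{p−3} ≢ 0 (mod p). -/

import Mathlib

noncomputable section

/-- `i` in the Gaussian integers. -/
def Ig : GaussianInt := ⟨0, 1⟩

/-- Classical power sum `S_r(N) = ∑_{t=1}^N t^r`. -/
def Sps (r N : ℕ) : ℤ := ∑ t ∈ Finset.Icc 1 N, (t : ℤ) ^ r

/-- Gaussian power sum `F_n(k,m) = ∑_{a=1}^k ∑_{b=1}^m (a+bi)^n`. -/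
def Fg (n k m : ℕ) : GaussianInt :=
  ∑ a ∈ Finset.Icc 1 k, ∑ b ∈ Finset.Icc 1 m, ((a : GaussianInt) + (b : GaussianInt) * Ig) ^ n

/-- Square Gaussian power sum `G_n(N) = F_n(N-1,N-1)`. -/
def Gg (n N : ℕ) : GaussianInt := Fg n (N - 1) (N - 1)

/-!
Write `g_n` for the real part of `G_n(p)` and `S_r` for `S_r(p - 1)`. The reflection `z ↦ p - z̄`
permutes the square of summation, so expanding `(p - z̄) ^ p` expresses `2 g_p` as a combination of
the `C(p, k) p ^ k g_{p - k}` with `1 ≤ k ≤ p`. The diagonal reflection `z ↦ i z̄` gives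
`g_{p - 1} = 0` and shows that the imaginary part of `G_p(p)` is `-g_p`. Since `p` divides `C(p, k)`
for `0 < k < p` and `g_n` for `0 < n < p - 1`, only the terms `k = 2, 3` survive modulo `p ^ 6`, and
the same expansion of `2 g_{p - 2}` leaves `24 g_p ≡ -p ^ 4 (p - 1) (p - 2) g_{p - 3}`. By the
binomial theorem `g_{p - 3} ≡ 2 (p - 1) S_{p - 3}` modulo `p ^ 2`, because the mixed terms contain
two power sums divisible by `p`, and Faulhaber's formula gives `S_{p - 3} ≡ p B_{p - 3}`. Finally
`g_p` is odd, hence nonzero, because `Re (z ^ n) ≡ Re z (Re z + Im z)` modulo `2` for odd `n > 1`.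
-/

open Finset

section Bernoulli

variable {p : ℕ} [Fact p.Prime]

lemma padicNorm_le_iff_of_sub_le {q r t : ℚ} (h : padicNorm p (q - r) ≤ t) :
    padicNorm p q ≤ t ↔ padicNorm p r ≤ t := by
  constructor <;> intro hle
  · rw [← sub_sub_cancel q r]
    exact padicNorm.sub.trans (max_le hle h)
  · rw [← sub_add_cancel q r]
    exact padicNorm.nonarchimedean.trans (max_le h hle)

lemma padicNorm_le_inv_iff_dvd_num (q : ℚ) : padicNorm p q ≤ (p : ℚ)⁻¹ ↔ (p : ℤ) ∣ q.num := by
  have hnum : padicNorm p q.num = padicNorm p q * padicNorm p q.den := by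
    rw [← padicNorm.mul, Rat.mul_den_eq_num]
  have hdvd : (p : ℤ) ∣ q.num ↔ padicNorm p q.num ≤ (p : ℚ)⁻¹ := by
    simpa using padicNorm.dvd_iff_norm_le (p := p) (n := 1) (z := q.num)
  have hp1 : (p : ℚ)⁻¹ < 1 := inv_lt_one_of_one_lt₀ (mod_cast (Fact.out : p.Prime).one_lt)
  by_cases hden : p ∣ q.den
  · have hnum_not : ¬ (p : ℤ) ∣ q.num := fun h => (Fact.out : p.Prime).one_lt.ne'
      (Nat.eq_one_of_dvd_coprimes q.reduced (Int.natCast_dvd.1 h) hden)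
    refine iff_of_false (fun hq => ?_) hnum_not
    have := (padicNorm.nat_lt_one_iff q.den).2 hden
    have h1 := (padicNorm.int_eq_one_iff q.num).2 hnum_not
    nlinarith [padicNorm.nonneg (p := p) (q := q.den), padicNorm.nonneg (p := p) (q := q)]
  · rw [hdvd, hnum, (padicNorm.nat_eq_one_iff q.den).2 hden, mul_one]

lemma padicNorm_natCast_eq_one_of_lt {n : ℕ} (hn : n ≠ 0) (h : n < p) : padicNorm p n = 1 :=
  (padicNorm.nat_eq_one_iff n).2 (Nat.not_dvd_of_pos_of_lt (Nat.pos_of_ne_zero hn) h)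

lemma padicNorm_bernoulli_le_one {n : ℕ} (hn : n + 1 < p) : padicNorm p (bernoulli n) ≤ 1 := by
  have hinv {q : ℕ} (hq : q ≠ 0) (hqp : q < p) : padicNorm p (1 / q) = 1 := by
    rw [padicNorm.div, padicNorm_natCast_eq_one_of_lt hq hqp, padicNorm.one, div_one]
  obtain ⟨k, rfl | rfl⟩ := n.even_or_odd'
  · obtain ⟨z, hz⟩ := Bernoulli.vonStaudt_clausen k
    rw [eq_sub_of_add_eq hz.symm]
    refine padicNorm.sub.trans (max_le (padicNorm.of_int z) ?_)
    refine padicNorm.sum_le' (fun q hq => ?_) zero_le_one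
    rw [mem_filter, mem_range] at hq
    exact (hinv hq.2.1.ne_zero (by lia)).le
  · obtain rfl | hk := k.eq_zero_or_pos
    · rw [bernoulli_one, neg_div, padicNorm.neg]
      exact (hinv two_ne_zero (by lia)).le
    · rw [bernoulli_eq_zero_of_odd (odd_two_mul_add_one k) (by lia), padicNorm.zero]
      exact zero_le_one

lemma Sps_eq_sum_range {r : ℕ} (hr : r ≠ 0) (N : ℕ) :
    Sps r N = ∑ t ∈ range (N + 1), (t : ℤ) ^ r := by
  rw [sum_range_eq_add_Ico _ N.add_one_pos, Ico_add_one_right_eq_Icc, Sps, Nat.cast_zero,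
    zero_pow hr, zero_add]

lemma padicNorm_prime_mul (q : ℚ) : padicNorm p (p * q) = (p : ℚ)⁻¹ * padicNorm p q := by
  rw [padicNorm.mul, padicNorm.padicNorm_p_of_prime]

lemma padicNorm_prime_pow (n : ℕ) : padicNorm p ((p : ℚ) ^ n) = (p : ℚ)⁻¹ ^ n := by
  induction n with
  | zero => simp
  | succ n ih => rw [pow_succ', padicNorm_prime_mul, ih, pow_succ']

lemma padicNorm_Sps_sub_mul_bernoulli_le {r : ℕ} (hr : r ≠ 0) (hrp : r + 1 < p) :
    padicNorm p (Sps r (p - 1) - p * bernoulli r) ≤ (p : ℚ)⁻¹ ^ 2 := by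
  have hfaulhaber : (Sps r (p - 1) : ℚ) - p * bernoulli r = ∑ i ∈ range r,
      bernoulli i * (r + 1).choose i * (p : ℚ) ^ (r + 1 - i) / ((r + 1 : ℕ) : ℚ) := by
    rw [Sps_eq_sum_range hr, Nat.sub_add_cancel (Fact.out : p.Prime).one_le]
    push_cast
    rw [sum_range_pow, sum_range_succ, Nat.choose_succ_self_right, Nat.add_sub_cancel_left]
    push_cast
    field_simp
    ring
  rw [hfaulhaber]
  refine padicNorm.sum_le' (fun i hi => ?_) (by positivity)
  rw [mem_range] at hi
  have hpow : padicNorm p ((p : ℚ) ^ (r + 1 - i)) ≤ (p : ℚ)⁻¹ ^ 2 := by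
    rw [padicNorm_prime_pow]
    exact pow_le_pow_of_le_one (by positivity) (Nat.cast_inv_le_one p) (by lia)
  have hcoeff : padicNorm p (bernoulli i * (r + 1).choose i) ≤ 1 := by
    rw [padicNorm.mul]
    exact mul_le_one₀ (padicNorm_bernoulli_le_one (by lia)) (padicNorm.nonneg _)
      (padicNorm.of_nat _)
  rw [padicNorm.div, padicNorm_natCast_eq_one_of_lt r.succ_ne_zero hrp, div_one, padicNorm.mul]
  exact (mul_le_of_le_one_left (padicNorm.nonneg _) hcoeff).trans hpow

lemma dvd_Sps {r : ℕ} (hr : r ≠ 0) (hrp : r + 1 < p) : (p : ℤ) ∣ Sps r (p - 1) := by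
  have hcongr : padicNorm p (Sps r (p - 1) - p * bernoulli r) ≤ (p : ℚ)⁻¹ :=
    (padicNorm_Sps_sub_mul_bernoulli_le hr hrp).trans
      (pow_le_of_le_one (by positivity) (Nat.cast_inv_le_one p) two_ne_zero)
  have hB : padicNorm p (p * bernoulli r) ≤ (p : ℚ)⁻¹ := by
    rw [padicNorm_prime_mul]
    exact mul_le_of_le_one_right (by positivity) (padicNorm_bernoulli_le_one hrp)
  simpa using (padicNorm.dvd_iff_norm_le (n := 1)).2
    (by simpa using (padicNorm_le_iff_of_sub_le hcongr).2 hB)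

lemma sq_dvd_Sps_iff {r : ℕ} (hr : r ≠ 0) (hrp : r + 1 < p) :
    (p : ℤ) ^ 2 ∣ Sps r (p - 1) ↔ (p : ℤ) ∣ (bernoulli r).num := by
  have hp : (0 : ℚ) < (p : ℚ)⁻¹ := inv_pos.2 (mod_cast (Fact.out : p.Prime).pos)
  calc (p : ℤ) ^ 2 ∣ Sps r (p - 1)
      ↔ padicNorm p (Sps r (p - 1)) ≤ (p : ℚ)⁻¹ ^ 2 := by
        simpa using padicNorm.dvd_iff_norm_le (p := p) (n := 2) (z := Sps r (p - 1))
    _ ↔ padicNorm p (p * bernoulli r) ≤ (p : ℚ)⁻¹ ^ 2 :=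
        padicNorm_le_iff_of_sub_le (padicNorm_Sps_sub_mul_bernoulli_le hr hrp)
    _ ↔ padicNorm p (bernoulli r) ≤ (p : ℚ)⁻¹ := by
        rw [padicNorm_prime_mul, sq, mul_le_mul_iff_right₀ hp]
    _ ↔ (p : ℤ) ∣ (bernoulli r).num := padicNorm_le_inv_iff_dvd_num _

end Bernoulli

section GaussianUnit

lemma Ig_pow_four : Ig ^ 4 = 1 := by
  decide

lemma Ig_pow_eq_pow_mod (n : ℕ) : Ig ^ n = Ig ^ (n % 4) :=
  pow_eq_pow_mod n Ig_pow_four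

lemma zsqrtd_re_sum {d : ℤ} {ι : Type*} (s : Finset ι) (f : ι → ℤ√d) :
    (∑ i ∈ s, f i).re = ∑ i ∈ s, (f i).re :=
  map_sum (AddMonoidHom.mk' Zsqrtd.re Zsqrtd.re_add) f s

end GaussianUnit

section Symmetries

lemma sum_Icc_one_reflect {M : Type*} [AddCommMonoid M] (N : ℕ) (f : ℕ → M) :
    ∑ a ∈ Icc 1 (N - 1), f (N - a) = ∑ a ∈ Icc 1 (N - 1), f a := by
  have hIco : Icc 1 (N - 1) = Ico 1 N := by
    ext a
    simp only [mem_Icc, mem_Ico]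
    lia
  rw [hIco, sum_Ico_reflect _ _ N.le_succ, Nat.add_sub_cancel, Nat.add_sub_cancel_left]

lemma star_Fg (n k m : ℕ) :
    star (Fg n k m) =
      ∑ a ∈ Icc 1 k, ∑ b ∈ Icc 1 m, star ((a : GaussianInt) + (b : GaussianInt) * Ig) ^ n := by
  simp only [Fg, star_sum, star_pow]

lemma Gg_eq_Ig_pow_mul_star (n N : ℕ) : Gg n N = Ig ^ n * star (Gg n N) := by
  have hswap (a b : ℕ) : (a : GaussianInt) + b * Ig = Ig * star ((b : GaussianInt) + a * Ig) := by
    ext <;> simp [Ig]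
  rw [Gg, star_Fg, Fg, sum_comm, mul_sum]
  refine sum_congr rfl fun b _ => ?_
  rw [mul_sum]
  refine sum_congr rfl fun a _ => ?_
  rw [hswap, mul_pow]

lemma im_Gg_of_mod_four_eq_three {n : ℕ} (hn : n % 4 = 3) (N : ℕ) :
    (Gg n N).im = -(Gg n N).re := by
  have h := congrArg Zsqrtd.im (Gg_eq_Ig_pow_mul_star n N)
  rw [Ig_pow_eq_pow_mod, hn] at h
  simpa [Ig, pow_succ] using h

lemma re_Gg_of_mod_four_eq_two {n : ℕ} (hn : n % 4 = 2) (N : ℕ) : (Gg n N).re = 0 := by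
  have h : (Gg n N).re = -(Gg n N).re := by
    have h := congrArg Zsqrtd.re (Gg_eq_Ig_pow_mul_star n N)
    rw [Ig_pow_eq_pow_mod, hn] at h
    simpa [Ig, pow_succ] using h
  lia

lemma Gg_eq_sum_star (n N : ℕ) :
    Gg n N = ∑ k ∈ range (n + 1),
      (((-1) ^ (n - k) * n.choose k * N ^ k : ℤ) : GaussianInt) * star (Gg (n - k) N) := by
  have hreflect (b : ℕ) : ∑ a ∈ Icc 1 (N - 1), ((a : GaussianInt) + b * Ig) ^ n =
      ∑ a ∈ Icc 1 (N - 1), ((N : GaussianInt) + -star ((a : GaussianInt) + b * Ig)) ^ n := by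
    rw [← sum_Icc_one_reflect]
    refine sum_congr rfl fun a ha => ?_
    rw [mem_Icc] at ha
    congr 1
    ext <;> simp [Ig, Nat.cast_sub (show a ≤ N by lia), sub_eq_add_neg]
  rw [Gg, Fg, sum_comm]
  simp only [hreflect]
  simp only [add_pow]
  rw [sum_comm]
  simp only [sum_comm (s := Icc 1 (N - 1)) (t := range (n + 1)), Gg, star_Fg, mul_sum]
  refine sum_congr rfl fun k _ => sum_congr rfl fun a _ => sum_congr rfl fun b _ => ?_
  rw [neg_pow]
  push_cast
  ring

lemma two_mul_re_Gg_of_odd {n : ℕ} (hn : Odd n) (N : ℕ) :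
    2 * (Gg n N).re = ∑ k ∈ range n,
      (-1) ^ k * n.choose (k + 1) * (N : ℤ) ^ (k + 1) * (Gg (n - (k + 1)) N).re := by
  have hre : (Gg n N).re = ∑ k ∈ range (n + 1),
      (-1) ^ (n - k) * n.choose k * (N : ℤ) ^ k * (Gg (n - k) N).re := by
    conv_lhs => rw [Gg_eq_sum_star, zsqrtd_re_sum]
    simp only [Zsqrtd.re_smul, Zsqrtd.re_star]
  have hsign : ∀ k ∈ range n, (-1 : ℤ) ^ (n - (k + 1)) = (-1) ^ k := fun k hk => by
    rw [mem_range] at hk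
    exact neg_one_pow_congr (by grind)
  rw [sum_range_succ', sum_congr rfl fun k hk => by rw [hsign k hk]] at hre
  simp only [Nat.sub_zero, hn.neg_one_pow, Nat.choose_zero_right, Nat.cast_one, pow_zero] at hre
  linarith

end Symmetries

section PowerSumExpansion

lemma Sps_zero (N : ℕ) : Sps 0 N = N := by
  simp [Sps]

lemma Fg_eq_sum_Sps (n k m : ℕ) :
    Fg n k m = ∑ j ∈ range (n + 1),
      ((n.choose j * Sps j k * Sps (n - j) m : ℤ) : GaussianInt) * Ig ^ (n - j) := by
  have hterm (j : ℕ) : ((n.choose j * Sps j k * Sps (n - j) m : ℤ) : GaussianInt) * Ig ^ (n - j) =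
      ∑ a ∈ Icc 1 k, ∑ b ∈ Icc 1 m,
        (a : GaussianInt) ^ j * (b * Ig) ^ (n - j) * n.choose j := by
    simp only [Sps, Int.cast_mul, Int.cast_sum, Int.cast_pow, Int.cast_natCast, mul_sum, sum_mul]
    rw [sum_comm]
    refine sum_congr rfl fun a _ => sum_congr rfl fun b _ => ?_
    ring
  simp only [hterm, Fg, add_pow]
  rw [sum_comm (s := range (n + 1))]
  exact sum_congr rfl fun a _ => sum_comm

lemma re_Gg_eq_sum_Sps (n N : ℕ) :
    (Gg n N).re = ∑ j ∈ range (n + 1),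
      n.choose j * Sps j (N - 1) * Sps (n - j) (N - 1) * (Ig ^ (n - j)).re := by
  rw [Gg, Fg_eq_sum_Sps, zsqrtd_re_sum]
  simp only [Zsqrtd.re_smul]

variable {p : ℕ} [Fact p.Prime]

lemma re_Gg_modEq_sq {n : ℕ} (hn : n ≠ 0) (hnp : n + 1 < p) :
    (Gg n p).re ≡ (p - 1) * (1 + (Ig ^ n).re) * Sps n (p - 1) [ZMOD p ^ 2] := by
  have hmid : (p : ℤ) ^ 2 ∣ ∑ j ∈ Ico 1 n,
      n.choose j * Sps j (p - 1) * Sps (n - j) (p - 1) * (Ig ^ (n - j)).re := by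
    refine dvd_sum fun j hj => Dvd.dvd.mul_right ?_ _
    rw [mem_Ico] at hj
    rw [sq, mul_assoc]
    exact (mul_dvd_mul (dvd_Sps (by lia) (by lia)) (dvd_Sps (by lia) (by lia))).mul_left _
  have hcast : ((p - 1 : ℕ) : ℤ) = p - 1 := Nat.cast_pred (Fact.out : p.Prime).pos
  rw [re_Gg_eq_sum_Sps, sum_range_succ, sum_range_eq_add_Ico _ (Nat.pos_of_ne_zero hn),
    Int.modEq_comm, Int.modEq_iff_dvd]
  convert hmid using 1
  simp only [Nat.choose_zero_right, Nat.choose_self, Nat.sub_zero, Nat.sub_self, Sps_zero, hcast,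
    pow_zero, Zsqrtd.re_one]
  push_cast
  ring

lemma dvd_re_Gg {n : ℕ} (hn : n ≠ 0) (hnp : n + 1 < p) : (p : ℤ) ∣ (Gg n p).re :=
  ((re_Gg_modEq_sq hn hnp).of_dvd (dvd_pow_self _ two_ne_zero)).dvd_iff.2
    ((dvd_Sps hn hnp).mul_left _)

lemma re_Gg_modEq_sq_of_four_dvd {n : ℕ} (hn : n ≠ 0) (h4 : 4 ∣ n) (hnp : n + 1 < p) :
    (Gg n p).re ≡ 2 * (p - 1) * Sps n (p - 1) [ZMOD p ^ 2] := by
  have h := re_Gg_modEq_sq hn hnp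
  rw [Ig_pow_eq_pow_mod, Nat.mod_eq_zero_of_dvd h4, pow_zero, Zsqrtd.re_one] at h
  convert h using 1
  ring

end PowerSumExpansion

section Supercongruence

lemma choose_succ_mul_eq_choose_mul_sub (n k : ℕ) :
    (n.choose (k + 1) : ℤ) * (k + 1) = n.choose k * (n - k) := by
  obtain hk | hk := le_or_gt k n
  · have h := Nat.choose_succ_right_eq n k
    zify [hk] at h
    exact h
  · rw [Nat.choose_eq_zero_of_lt hk, Nat.choose_eq_zero_of_lt (by lia)]
    simp

lemma two_mul_re_Gg_modEq_of_dvd {n N j : ℕ} {M : ℤ} (hn : Odd n) (hj : j ≤ n)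
    (hM : ∀ k, j ≤ k → k < n → M ∣ n.choose (k + 1) * N ^ (k + 1)) :
    2 * (Gg n N).re ≡ ∑ k ∈ range j,
      (-1) ^ k * n.choose (k + 1) * (N : ℤ) ^ (k + 1) * (Gg (n - (k + 1)) N).re [ZMOD M] := by
  rw [two_mul_re_Gg_of_odd hn, ← sum_range_add_sum_Ico _ hj]
  refine (Int.modEq_iff_dvd.2 ?_).symm
  rw [add_sub_cancel_left]
  refine dvd_sum fun k hk => Dvd.dvd.mul_right ?_ _
  rw [mem_Ico] at hk
  rw [mul_assoc]
  exact (hM k hk.1 hk.2).mul_left _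

variable {p : ℕ} [hp : Fact p.Prime]

lemma two_mul_re_Gg_self_modEq {j : ℕ} (hodd : Odd p) (hj : j + 2 ≤ p) :
    2 * (Gg p p).re ≡ ∑ k ∈ range j,
      (-1) ^ k * p.choose (k + 1) * (p : ℤ) ^ (k + 1) * (Gg (p - (k + 1)) p).re
      [ZMOD p ^ (j + 2)] := by
  refine two_mul_re_Gg_modEq_of_dvd hodd (by lia) fun k hjk hk => ?_
  obtain hlt | rfl : k + 1 < p ∨ k + 1 = p := by lia
  · rw [pow_succ']
    exact mul_dvd_mul (Int.natCast_dvd_natCast.2 (hp.out.dvd_choose_self k.succ_ne_zero hlt))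
      (pow_dvd_pow _ (by lia))
  · exact (pow_dvd_pow _ hj).mul_left _

lemma two_mul_re_Gg_modEq_cube {n : ℕ} (hn : Odd n) (h3 : 3 ≤ n) (hnp : n ≤ p) :
    2 * (Gg n p).re ≡ n * p * (Gg (n - 1) p).re [ZMOD p ^ 3] := by
  have htrunc := two_mul_re_Gg_modEq_of_dvd (N := p) (j := 2) (M := p ^ 3) hn (by lia)
    fun k hk _ => (pow_dvd_pow _ (by lia)).mul_left _
  refine htrunc.trans (Int.modEq_iff_dvd.2 ?_)
  obtain ⟨c, hc⟩ : (p : ℤ) ∣ (Gg (n - 2) p).re := dvd_re_Gg (by lia) (by lia)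
  refine ⟨n.choose 2 * c, ?_⟩
  simp only [sum_range_succ, sum_range_zero, Nat.reduceAdd, hc, Nat.choose_one_right]
  push_cast
  ring

lemma two_mul_re_Gg_self_modEq_pow_six (hp7 : 7 ≤ p) (h3 : p % 4 = 3) :
    2 * (Gg p p).re ≡ -(p.choose 2 * p ^ 2 * (Gg (p - 2) p).re) +
      p.choose 3 * p ^ 3 * (Gg (p - 3) p).re [ZMOD p ^ 6] := by
  have hodd : Odd p := Nat.odd_iff.2 (by lia)
  obtain ⟨c, hc⟩ : (p : ℤ) ∣ p.choose 4 :=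
    Int.natCast_dvd_natCast.2 (hp.out.dvd_choose_self four_ne_zero (by lia))
  obtain ⟨d, hd⟩ : (p : ℤ) ∣ (Gg (p - 4) p).re := dvd_re_Gg (by lia) (by lia)
  refine (two_mul_re_Gg_self_modEq (j := 4) hodd (by lia)).trans (Int.modEq_iff_dvd.2 ⟨c * d, ?_⟩)
  simp only [sum_range_succ, sum_range_zero, Nat.reduceAdd, hc, hd,
    re_Gg_of_mod_four_eq_two (show (p - 1) % 4 = 2 by lia)]
  ring

lemma re_Gg_self_modEq (hp7 : 7 ≤ p) (h3 : p % 4 = 3) :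
    24 * (Gg p p).re ≡ -(p ^ 4 * (p - 1) * (p - 2) * (Gg (p - 3) p).re) [ZMOD p ^ 6] := by
  have hC2 : (p.choose 2 : ℤ) * 2 = p * (p - 1) := by
    simpa using choose_succ_mul_eq_choose_mul_sub p 1
  have hC3 : (p.choose 3 : ℤ) * 3 = p.choose 2 * (p - 2) := by
    simpa using choose_succ_mul_eq_choose_mul_sub p 2
  have hcube : 2 * (Gg (p - 2) p).re ≡ (p - 2) * p * (Gg (p - 3) p).re [ZMOD p ^ 3] := by
    have h := two_mul_re_Gg_modEq_cube (p := p) (n := p - 2) (Nat.odd_iff.2 (by lia)) (by lia)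
      (by lia)
    rwa [Nat.cast_sub (by lia), Nat.cast_two, Nat.sub_sub] at h
  calc 24 * (Gg p p).re = 12 * (2 * (Gg p p).re) := by ring
    _ ≡ 12 * (-(p.choose 2 * p ^ 2 * (Gg (p - 2) p).re) +
          p.choose 3 * p ^ 3 * (Gg (p - 3) p).re) [ZMOD p ^ 6] :=
        (two_mul_re_Gg_self_modEq_pow_six hp7 h3).mul_left 12
    _ = -3 * (p - 1) * (p ^ 3 * (2 * (Gg (p - 2) p).re)) +
          2 * p ^ 4 * (p - 1) * (p - 2) * (Gg (p - 3) p).re := by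
        linear_combination -6 * p ^ 2 * (Gg (p - 2) p).re * hC2 +
          2 * p ^ 3 * (Gg (p - 3) p).re * (2 * hC3 + (p - 2) * hC2)
    _ ≡ -3 * (p - 1) * (p ^ 3 * ((p - 2) * p * (Gg (p - 3) p).re)) +
          2 * p ^ 4 * (p - 1) * (p - 2) * (Gg (p - 3) p).re [ZMOD p ^ 6] := by
        have h := (hcube.mul_left' (c := p ^ 3)).mul_left (-3 * (p - 1))
        rw [← pow_add] at h
        exact h.add_right _
    _ = -(p ^ 4 * (p - 1) * (p - 2) * (Gg (p - 3) p).re) := by ring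

lemma re_Gg_self_modEq_Sps (hp7 : 7 ≤ p) (h3 : p % 4 = 3) :
    24 * (Gg p p).re ≡ -2 * (p - 1) ^ 2 * (p - 2) * (p ^ 4 * Sps (p - 3) (p - 1))
      [ZMOD p ^ 6] := by
  have hGS := re_Gg_modEq_sq_of_four_dvd (p := p) (n := p - 3) (by lia) (by lia) (by lia)
  refine (re_Gg_self_modEq hp7 h3).trans ?_
  convert (hGS.mul_left' (c := p ^ 4)).mul_left (-(p - 1) * (p - 2)) using 1 <;> ring

lemma pow_dvd_re_Gg_self_iff (hp7 : 7 ≤ p) (h3 : p % 4 = 3) {k : ℕ} (hk : k ≤ 6) :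
    (p : ℤ) ^ k ∣ (Gg p p).re ↔ (p : ℤ) ^ k ∣ p ^ 4 * Sps (p - 3) (p - 1) := by
  have hprime : Prime (p : ℤ) := Nat.prime_iff_prime_int.1 hp.out
  have hcancel {a b : ℤ} (ha : ¬ (p : ℤ) ∣ a) : (p : ℤ) ^ k ∣ a * b ↔ (p : ℤ) ^ k ∣ b :=
    ⟨hprime.pow_dvd_of_dvd_mul_left k ha, fun h => h.mul_left a⟩
  have hnot_dvd {a : ℕ} (ha : a ≠ 0) (hap : a < p) : ¬ (p : ℤ) ∣ a := fun h =>
    ha (Nat.eq_zero_of_dvd_of_lt (Int.natCast_dvd_natCast.1 h) hap)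
  have hleft : ¬ (p : ℤ) ∣ 24 := fun h => by
    obtain h | h := hprime.dvd_or_dvd (show (p : ℤ) ∣ (4 : ℕ) * (6 : ℕ) from h)
    · exact hnot_dvd four_ne_zero (by lia) h
    · exact hnot_dvd (by lia) (by lia) h
  have hright : ¬ (p : ℤ) ∣ -2 * (p - 1) ^ 2 * (p - 2) := fun h => by
    have hcubic : (-2 * (p - 1) ^ 2 * (p - 2) : ℤ) = p * (-2 * p ^ 2 + 8 * p - 10) + 4 := by ring
    rw [hcubic, dvd_add_right (dvd_mul_right _ _)] at h
    exact hnot_dvd four_ne_zero (by lia) h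
  calc (p : ℤ) ^ k ∣ (Gg p p).re ↔ (p : ℤ) ^ k ∣ 24 * (Gg p p).re := (hcancel hleft).symm
    _ ↔ (p : ℤ) ^ k ∣ -2 * (p - 1) ^ 2 * (p - 2) * (p ^ 4 * Sps (p - 3) (p - 1)) :=
        ((re_Gg_self_modEq_Sps hp7 h3).of_dvd (pow_dvd_pow _ hk)).dvd_iff
    _ ↔ (p : ℤ) ^ k ∣ p ^ 4 * Sps (p - 3) (p - 1) := hcancel hright

lemma pow_five_dvd_re_Gg_self (hp7 : 7 ≤ p) (h3 : p % 4 = 3) : (p : ℤ) ^ 5 ∣ (Gg p p).re := by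
  rw [pow_dvd_re_Gg_self_iff hp7 h3 (by lia), pow_succ]
  exact mul_dvd_mul_left _ (dvd_Sps (by lia) (by lia))

lemma pow_six_dvd_re_Gg_self_iff (hp7 : 7 ≤ p) (h3 : p % 4 = 3) :
    (p : ℤ) ^ 6 ∣ (Gg p p).re ↔ (p : ℤ) ∣ (bernoulli (p - 3)).num := by
  rw [pow_dvd_re_Gg_self_iff hp7 h3 le_rfl, pow_add _ 4 2,
    mul_dvd_mul_iff_left (pow_ne_zero _ (Nat.cast_ne_zero.2 hp.out.ne_zero)),
    sq_dvd_Sps_iff (by lia) (by lia)]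

end Supercongruence

section Parity

lemma intCast_re_sq_mul (z w : GaussianInt) :
    ((z ^ 2 * w).re : ZMod 2) = (z.re + z.im) * w.re := by
  have hre : (z ^ 2 * w).re = (z.re ^ 2 - z.im ^ 2) * w.re - 2 * (z.re * z.im * w.im) := by
    simp only [sq, Zsqrtd.re_mul, Zsqrtd.im_mul]
    ring
  rw [hre]
  push_cast
  simp only [ZMod.pow_card, CharTwo.sub_eq_add, CharTwo.two_eq_zero, zero_mul, add_zero]

lemma intCast_re_pow {n : ℕ} (hn : Odd n) (hn1 : n ≠ 1) (z : GaussianInt) :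
    ((z ^ n).re : ZMod 2) = z.re * (z.re + z.im) := by
  obtain ⟨m, rfl⟩ : ∃ m, n = 2 + (2 * m + 1) := ⟨(n - 3) / 2, by grind⟩
  clear hn hn1
  induction m with
  | zero => rw [pow_add, intCast_re_sq_mul, Nat.mul_zero, Nat.zero_add, pow_one, mul_comm]
  | succ m ih =>
    rw [pow_add, intCast_re_sq_mul, show 2 * (m + 1) + 1 = 2 + (2 * m + 1) by ring, ih,
      mul_left_comm, ← sq, ZMod.pow_card]

lemma intCast_re_Gg {n : ℕ} (hn : Odd n) (hn1 : n ≠ 1) (N : ℕ) :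
    ((Gg n N).re : ZMod 2) = (N - 1 : ℕ) * Sps 1 (N - 1) + Sps 1 (N - 1) := by
  have hterm (a b : ℕ) : (((a + b * Ig : GaussianInt) ^ n).re : ZMod 2) = a + a * b := by
    have hre : (a + b * Ig : GaussianInt).re = a := by simp [Ig]
    have him : (a + b * Ig : GaussianInt).im = b := by simp [Ig]
    rw [intCast_re_pow hn hn1, hre, him, mul_add, ← sq, ZMod.pow_card]
    simp only [Int.cast_natCast]
  have hS : ((Sps 1 (N - 1) : ℤ) : ZMod 2) = ∑ a ∈ Icc 1 (N - 1), (a : ZMod 2) := by simp [Sps]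
  have hsq (x : ZMod 2) : x * x = x := by rw [← sq, ZMod.pow_card]
  simp only [Gg, Fg, zsqrtd_re_sum, Int.cast_sum, hterm, sum_add_distrib, sum_const, Nat.card_Icc,
    Nat.add_sub_cancel, nsmul_eq_mul, ← mul_sum, ← sum_mul, hS, hsq]

lemma odd_Sps_one {N : ℕ} (hN : N % 4 = 3) : Odd (Sps 1 (N - 1)) := by
  obtain ⟨m, rfl⟩ : ∃ m, N = 4 * m + 3 := ⟨N / 4, by lia⟩
  have hgauss : (∑ i ∈ range (4 * m + 2 + 1), i) * 2 = (4 * m + 3) * (4 * m + 2) :=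
    sum_range_id_mul_two _
  zify at hgauss
  have hS : Sps 1 (4 * m + 2) = (2 * (2 * m + 1) + 1) * (2 * m + 1) := by
    simp only [Sps_eq_sum_range one_ne_zero, pow_one]
    linarith
  exact hS ▸ (odd_two_mul_add_one _).mul (odd_two_mul_add_one _)

lemma odd_re_Gg {n N : ℕ} (hn : Odd n) (hn1 : n ≠ 1) (hN : N % 4 = 3) : Odd (Gg n N).re := by
  have hN1 : ((N - 1 : ℕ) : ZMod 2) = 0 := ZMod.natCast_eq_zero_iff_even.2 (by grind)
  rw [← ZMod.intCast_eq_one_iff_odd, intCast_re_Gg hn hn1, hN1, zero_mul, zero_add,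
    ZMod.intCast_eq_one_iff_odd]
  exact odd_Sps_one hN

end Parity

lemma padicValInt_neg (p : ℕ) (z : ℤ) : padicValInt p (-z) = padicValInt p z := by
  rw [padicValInt, Int.natAbs_neg, padicValInt]

theorem stmt16 (p : ℕ) (hp : p.Prime) (hp7 : 7 ≤ p) (h3 : p % 4 = 3) :
    (6 ≤ min (padicValInt p (Gg p p).re) (padicValInt p (Gg p p).im) ↔
      (p : ℤ) ∣ (bernoulli (p - 3)).num) ∧
    (min (padicValInt p (Gg p p).re) (padicValInt p (Gg p p).im) = 5 ↔
      ¬ (p : ℤ) ∣ (bernoulli (p - 3)).num) := by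
  have := Fact.mk hp
  -- Since `padicValInt p 0 = 0`, divisibility bounds the valuation only once the sum is nonzero.
  have hne : (Gg p p).re ≠ 0 := fun h => by
    simpa [h] using odd_re_Gg (Nat.odd_iff.2 (by lia : p % 2 = 1)) hp.ne_one h3
  have hval (k : ℕ) : k ≤ padicValInt p (Gg p p).re ↔ (p : ℤ) ^ k ∣ (Gg p p).re := by
    rw [padicValInt_dvd_iff, or_iff_right hne]
  have h5 := (hval 5).2 (pow_five_dvd_re_Gg_self hp7 h3)
  have h6 := (hval 6).trans (pow_six_dvd_re_Gg_self_iff hp7 h3)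
  rw [im_Gg_of_mod_four_eq_three h3, padicValInt_neg, min_self, ← h6]
  exact ⟨Iff.rfl, by lia⟩
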